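/- Let p be a prime, n ≥ 1, let M be a finite abelian p-group acted on by automorphisms by a cyclic group ⟨φ⟩ of order p^n, let q be a prime different from p, and let V be a finite module over the prime field 𝔽_q for the semidirect product M ⋊ ⟨φ⟩ on which M acts faithfully. Then the order of the subgroup [M, φ^{p^{n-1}}] is at most |C_V(φ)|^{p^n}. -/

import Mathlib

/-- The subgroup `[M, ψ]` generated by all commutators `x⁻¹ · ψ(x)`. -/
def commutatorWithAut {M : Type*} [Group M] (ψ : MulAut M) : Subgroup M :=
  Subgroup.closure {y : M | ∃ x : M, y = x⁻¹ * ψ x}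

/-! Put `A = [M, z]`, where `z` lies in every nontrivial subgroup of `G`.

Since `|M|` is invertible in the ground field, some vector `w` has trivial stabilizer in `A`, so
`a ↦ aw - w` embeds `A` into `[V, A]`, and it remains to bound `dim [V, A]` by `|G| dim C_V(G)`.

For this one may extend scalars to an algebraic closure, where `V` is the direct sum of the
eigenspaces of the characters of `M`, which `G` permutes. A character with nontrivial stabilizer in
`G` is fixed by `z`, hence trivial on `A`, and its eigenspace contributes nothing to `[V, A]`; so
`[V, A]` lies in the sum of the eigenspaces in free orbits. If `E` is the projection onto the
eigenspaces of representatives of these orbits and `N = ∑ g`, then `E N E = E`, so that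
`rank E ≤ rank N ≤ dim C_V(G)`, while the `|G|` translates of the image of `E` span that sum. -/

open Module TensorProduct

open MulAction (orbitRel stabilizer)

open Representation (Coinvariants.ker)

lemma finrank_iSup_le_sum {K V ι : Type*} [DivisionRing K] [AddCommGroup V] [Module K V]
    [FiniteDimensional K V] [Fintype ι] (U : ι → Submodule K V) :
    finrank K ↥(⨆ i, U i) ≤ ∑ i, finrank K (U i) := by
  classical
  rw [Submodule.iSup_eq_range_dfinsupp_lsum, ← finrank_directSum K fun i => U i]
  exact LinearMap.finrank_range_le _

lemma finrank_submodule_baseChange {F K V : Type*} [Field F] [CommRing K] [Nontrivial K]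
    [Algebra F K] [AddCommGroup V] [Module F V] (U : Submodule F V) :
    finrank K (U.baseChange K) = finrank F U := by
  have hinj : Function.Injective (U.subtype.baseChange K) :=
    Flat.lTensor_preserves_injective_linearMap (M := K) _ U.injective_subtype
  rw [Submodule.baseChange, LinearMap.finrank_range_of_inj hinj, finrank_baseChange]

lemma range_baseChange {F K V W : Type*} [CommSemiring F] [Semiring K] [Algebra F K]
    [AddCommMonoid V] [Module F V] [AddCommMonoid W] [Module F W] (f : V →ₗ[F] W) :
    (f.baseChange K).range = f.range.baseChange K := by
  have hf : f.baseChange K = f.range.subtype.baseChange K ∘ₗ f.rangeRestrict.baseChange K := by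
    rw [← LinearMap.baseChange_comp]
    rfl
  rw [hf, LinearMap.range_comp_of_range_eq_top, Submodule.baseChange]
  exact LinearMap.range_eq_top.mpr (LinearMap.lTensor_surjective K f.surjective_rangeRestrict)

lemma exists_set_orbit_representatives_of_stabilizer_eq_bot (G ι : Type*) [Group G]
    [MulAction G ι] :
    ∃ S : Set ι, (∀ i ∈ S, ∀ j ∈ S, ∀ g : G, g ≠ 1 → i ≠ g • j) ∧
      ∀ i, stabilizer G i = ⊥ → ∃ g : G, ∃ j ∈ S, g • j = i := by
  refine ⟨{i | stabilizer G i = ⊥ ∧ (Quotient.mk (orbitRel G ι) i).out = i}, ?_, ?_⟩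
  · rintro i ⟨-, hi⟩ j ⟨hjfree, hj⟩ g hg rfl
    have horbit : Quotient.mk (orbitRel G ι) (g • j) = Quotient.mk (orbitRel G ι) j :=
      Quotient.sound ⟨g, rfl⟩
    have hfix : g ∈ stabilizer G j := by rw [MulAction.mem_stabilizer_iff, ← hi, horbit, hj]
    exact hg (by simpa [hjfree] using hfix)
  · intro i hi
    obtain ⟨g, hg⟩ := Quotient.mk_out (s := orbitRel G ι) i
    refine ⟨g⁻¹, (Quotient.mk (orbitRel G ι) i).out, ⟨?_, by rw [Quotient.out_eq]⟩, ?_⟩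
    · rw [← hg]
      simp [MulAction.stabilizer_smul_eq_stabilizer_map_conj, hi]
    · rw [← hg]
      simp

section Imprimitivity

variable {K V G : Type*} [AddCommGroup V] [Group G]

lemma finrank_range_le_finrank_range_norm [Field K] [Module K V] [FiniteDimensional K V]
    [Fintype G] (τ : Representation K G V) {E : End K V}
    (hE : IsIdempotentElem E) (hτ : ∀ g, g ≠ 1 → E * τ g * E = 0) :
    finrank K E.range ≤ finrank K τ.norm.range := by
  classical
  have hnorm : E * τ.norm * E = E := by
    rw [Representation.norm, Finset.mul_sum, Finset.sum_mul,
      Finset.sum_eq_single 1 (fun g _ => hτ g) (by simp), map_one, mul_one, hE.eq]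
  calc finrank K E.range
    _ = finrank K ((τ.norm * E).range.map E) := by
      rw [← LinearMap.range_comp, ← Module.End.mul_eq_comp, ← mul_assoc, hnorm]
    _ ≤ finrank K (τ.norm * E).range := Submodule.finrank_map_le _ _
    _ ≤ finrank K τ.norm.range := Submodule.finrank_mono (LinearMap.range_comp_le_range _ _)

variable {ι : Type*} [MulAction G ι]

lemma exists_isIdempotentElem_range_le_iSup_map [CommRing K] [Module K V] [Finite ι]
    (τ : Representation K G V) {e : ι → End K V} (he : OrthogonalIdempotents e)
    (hτ : ∀ g i, τ g * e i = e (g • i) * τ g) :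
    ∃ E : End K V, IsIdempotentElem E ∧ (∀ g, g ≠ 1 → E * τ g * E = 0) ∧
      ∀ i, stabilizer G i = ⊥ → (e i).range ≤ ⨆ g, E.range.map (τ g) := by
  classical
  have := Fintype.ofFinite ι
  obtain ⟨S, hfree, hrep⟩ := exists_set_orbit_representatives_of_stabilizer_eq_bot G ι
  let E := ∑ i ∈ S.toFinset, e i
  refine ⟨E, he.isIdempotentElem_sum, fun g hg => ?_, fun i hi => ?_⟩
  · simp only [E, Finset.sum_mul, Finset.mul_sum]
    refine Finset.sum_eq_zero fun j hj => Finset.sum_eq_zero fun i hi => ?_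
    rw [Set.mem_toFinset] at hi hj
    rw [mul_assoc, hτ, ← mul_assoc, he.ortho (hfree i hi j hj g hg), zero_mul]
  · obtain ⟨g, j, hj, rfl⟩ := hrep i hi
    have hE : E * e j = e j := by
      rw [Finset.sum_mul, Finset.sum_eq_single_of_mem j (Set.mem_toFinset.mpr hj)
        fun i _ hij => he.ortho hij, he.idem j]
    have hconj : e (g • j) = τ g * E * (e j * τ g⁻¹) := by
      rw [mul_assoc (τ g), ← mul_assoc _ (e j), hE, ← mul_assoc, hτ, mul_assoc, ← map_mul,
        mul_inv_cancel, map_one, mul_one]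
    refine le_trans ?_ (le_iSup _ g)
    rw [hconj, Module.End.mul_eq_comp, ← LinearMap.range_comp]
    exact LinearMap.range_comp_le_range _ _

theorem finrank_le_card_mul_finrank_range_norm [Field K] [Module K V] [FiniteDimensional K V]
    [Fintype G] [Fintype ι] (τ : Representation K G V) {e : ι → End K V}
    (he : CompleteOrthogonalIdempotents e) (hτ : ∀ g i, τ g * e i = e (g • i) * τ g)
    {W : Submodule K V} (hW : ∀ i, stabilizer G i ≠ ⊥ → W ≤ (e i).ker) :
    finrank K W ≤ Fintype.card G * finrank K τ.norm.range := by
  obtain ⟨E, hE, hEτ, hspan⟩ :=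
    exists_isIdempotentElem_range_le_iSup_map τ he.toOrthogonalIdempotents hτ
  have hle : W ≤ ⨆ g, E.range.map (τ g) := by
    intro w hw
    rw [← End.one_apply (R := K) w, ← he.complete, LinearMap.sum_apply]
    refine Submodule.sum_mem _ fun i _ => ?_
    by_cases hi : stabilizer G i = ⊥
    · exact hspan i hi ⟨w, rfl⟩
    · rw [hW i hi hw]
      exact zero_mem _
  calc finrank K W
    _ ≤ ∑ g, finrank K (E.range.map (τ g)) :=
      (Submodule.finrank_mono hle).trans (finrank_iSup_le_sum _)
    _ ≤ ∑ _ : G, finrank K τ.norm.range :=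
      Finset.sum_le_sum fun g _ => (Submodule.finrank_map_le _ _).trans
        (finrank_range_le_finrank_range_norm τ hE hEτ)
    _ = Fintype.card G * finrank K τ.norm.range := by simp

end Imprimitivity

section Characters

lemma natCast_card_ne_zero_of_hasEnoughRootsOfUnity (K M : Type*) [CommRing K] [IsDomain K]
    [CommGroup M] [Finite M] [HasEnoughRootsOfUnity K (Monoid.exponent M)] :
    (Nat.card M : K) ≠ 0 := by
  have : NeZero (Monoid.exponent M) := ⟨Monoid.exponent_ne_zero_of_finite⟩
  obtain ⟨ζ, hζ⟩ := HasEnoughRootsOfUnity.exists_primitiveRoot K (Monoid.exponent M)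
  have hexp : (Monoid.exponent M : K) ≠ 0 := hζ.neZero'.ne
  obtain ⟨k, hk⟩ := card_dvd_exponent_pow_rank M
  refine left_ne_zero_of_mul (b := (k : K)) ?_
  rw [← Nat.cast_mul, ← hk, Nat.cast_pow]
  exact pow_ne_zero _ hexp

lemma sum_character_apply_of_ne_one {K M : Type*} [CommRing K] [IsDomain K] [CommGroup M]
    [Finite M] [HasEnoughRootsOfUnity K (Monoid.exponent M)] [Fintype (M →* Kˣ)] {m : M}
    (hm : m ≠ 1) : ∑ χ : M →* Kˣ, (χ m : K) = 0 := by
  obtain ⟨χ, hχ⟩ := CommGroup.exists_apply_ne_one_of_hasEnoughRootsOfUnity M K hm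
  refine sum_hom_units_eq_zero ((Units.coeHom K).comp (MonoidHom.eval m)) fun hone => hχ ?_
  ext
  exact DFunLike.congr_fun hone χ

/-- The idempotent `|M|⁻¹ ∑ χ(m)⁻¹ u(m)` of a character `χ` of a finite group `M`, in an algebra
`R` that receives a homomorphism `u` from `M`. When `u` is a representation, it is the projection
onto the vectors on which `M` acts through `χ`. -/
noncomputable def characterIdempotent {K M R : Type*} [Field K] [Group M] [Fintype M] [Ring R]
    [Algebra K R] (u : M →* R) (χ : M →* Kˣ) : R :=
  (Fintype.card M : K)⁻¹ • ∑ m, (χ m⁻¹ : K) • u m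

variable {K M R : Type*} [Field K] [Ring R] [Algebra K R]

lemma characterIdempotent_mul_map [Group M] [Fintype M] (u : M →* R) (χ : M →* Kˣ) (m : M) :
    characterIdempotent u χ * u m = (χ m : K) • characterIdempotent u χ := by
  rw [characterIdempotent, smul_mul_assoc, smul_comm, Finset.sum_mul,
    Finset.smul_sum (r := (χ m : K))]
  congr 1
  refine Fintype.sum_equiv (Equiv.mulRight m) _ _ fun x => ?_
  simp [smul_smul]

lemma mul_characterIdempotent_eq_characterIdempotent_mul [Group M] [Fintype M] (u : M →* R)
    (χ : M →* Kˣ) (α : MulAut M) {t : R} (ht : ∀ m, t * u m = u (α m) * t) :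
    t * characterIdempotent u χ = characterIdempotent u (χ.comp (α⁻¹).toMonoidHom) * t := by
  simp only [characterIdempotent, mul_smul_comm, smul_mul_assoc, Finset.mul_sum, Finset.sum_mul]
  congr 1
  refine Fintype.sum_equiv α.toEquiv _ _ fun m => ?_
  simp [ht]

variable [CommGroup M] [Fintype M]

lemma characterIdempotent_mul_characterIdempotent_of_ne (u : M →* R) {χ ψ : M →* Kˣ}
    (h : χ ≠ ψ) : characterIdempotent u χ * characterIdempotent u ψ = 0 := by
  have hsum : ∑ m, ((ψ m⁻¹ : K) * (χ m : K)) = 0 := by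
    have hne : (Units.coeHom K).comp (ψ⁻¹ * χ) ≠ 1 := fun hone => h <| by
      rw [eq_comm, ← inv_mul_eq_one]
      ext m
      exact DFunLike.congr_fun hone m
    simpa using sum_hom_units_eq_zero _ hne
  conv_lhs => enter [2]; rw [characterIdempotent]
  simp only [mul_smul_comm, Finset.mul_sum, characterIdempotent_mul_map, smul_smul]
  rw [← Finset.sum_smul, hsum, zero_smul, smul_zero]

theorem completeOrthogonalIdempotents_characterIdempotent
    [HasEnoughRootsOfUnity K (Monoid.exponent M)] [Fintype (M →* Kˣ)] (u : M →* R) :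
    CompleteOrthogonalIdempotents fun χ : M →* Kˣ => characterIdempotent u χ := by
  refine CompleteOrthogonalIdempotents.iff_ortho_complete.mpr
    ⟨fun χ ψ h => characterIdempotent_mul_characterIdempotent_of_ne u h, ?_⟩
  have hcard : (Fintype.card (M →* Kˣ) : K) = Nat.card M := by
    rw [← Nat.card_eq_fintype_card, CommGroup.card_monoidHom_of_hasEnoughRootsOfUnity]
  simp only [characterIdempotent, ← Finset.smul_sum]
  rw [Finset.sum_comm, Finset.sum_eq_single 1]
  · simp only [inv_one, map_one, Units.val_one, one_smul, Finset.sum_const, Finset.card_univ]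
    rw [← Nat.cast_smul_eq_nsmul K, hcard, smul_smul, ← Nat.card_eq_fintype_card,
      inv_mul_cancel₀ (natCast_card_ne_zero_of_hasEnoughRootsOfUnity K M), one_smul]
  · intro m _ hm
    rw [← Finset.sum_smul, sum_character_apply_of_ne_one (inv_ne_one.mpr hm), zero_smul]
  · simp

end Characters

section SemidirectProduct

/-- The contragredient action on the characters of `M` of a group `G` acting on `M` by
automorphisms: `g • χ = χ ∘ act g⁻¹`. -/
abbrev characterMulAction {K M G : Type*} [Monoid K] [Group M] [Group G] (act : G →* MulAut M) :
    MulAction G (M →* Kˣ) where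
  smul g χ := χ.comp ((act g)⁻¹).toMonoidHom
  one_smul χ := by
    ext
    simp [HSMul.hSMul]
  mul_smul g h χ := by
    ext
    simp [HSMul.hSMul]

lemma commutatorWithAut_le_ker {M N : Type*} [Group M] [Group N] {ψ : MulAut M} {f : M →* N}
    (hf : ∀ x, f (ψ x) = f x) : commutatorWithAut ψ ≤ f.ker := by
  rw [commutatorWithAut, Subgroup.closure_le]
  rintro _ ⟨x, rfl⟩
  simp [MonoidHom.mem_ker, hf]

variable {K M G V : Type*} [Field K] [AddCommGroup V] [Module K V]

lemma coinvariantsKer_le_ker_characterIdempotent [Group M] [Fintype M]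
    (σ : Representation K M V) {χ : M →* Kˣ} {A : Subgroup M} (hA : A ≤ χ.ker) :
    Coinvariants.ker (σ.comp A.subtype) ≤ (characterIdempotent σ χ).ker := by
  refine Submodule.span_le.mpr ?_
  rintro _ ⟨⟨a, v⟩, rfl⟩
  have h := LinearMap.congr_fun (characterIdempotent_mul_map σ χ a) v
  rw [MonoidHom.mem_ker.mp (hA a.2), Units.val_one, one_smul] at h
  rw [SetLike.mem_coe, LinearMap.mem_ker, map_sub, sub_eq_zero]
  exact h

theorem finrank_coinvariantsKer_commutatorWithAut_le_of_hasEnoughRootsOfUnity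
    [FiniteDimensional K V] [CommGroup M] [Finite M]
    [HasEnoughRootsOfUnity K (Monoid.exponent M)] [Group G] [Fintype G]
    {act : G →* MulAut M} (ρ : Representation K (M ⋊[act] G) V) {z : G}
    (hz : ∀ H : Subgroup G, H ≠ ⊥ → z ∈ H) :
    finrank K (Coinvariants.ker
        ((ρ.comp SemidirectProduct.inl).comp (commutatorWithAut (act z)).subtype)) ≤
      Fintype.card G * finrank K (Representation.norm (ρ.comp SemidirectProduct.inr)).range := by
  let _ : MulAction G (M →* Kˣ) := characterMulAction act
  have := Fintype.ofFinite M
  have := Fintype.ofFinite (M →* Kˣ)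
  let e : (M →* Kˣ) → End K V := characterIdempotent (ρ.comp SemidirectProduct.inl)
  have he : CompleteOrthogonalIdempotents e := completeOrthogonalIdempotents_characterIdempotent _
  refine finrank_le_card_mul_finrank_range_norm (ρ.comp SemidirectProduct.inr) he
    (fun g χ => ?_) fun χ hχ => ?_
  · refine mul_characterIdempotent_eq_characterIdempotent_mul _ χ (act g) fun m => ?_
    simp only [MonoidHom.comp_apply, ← map_mul ρ, SemidirectProduct.inl_aut, map_inv,
      inv_mul_cancel_right]
  · refine coinvariantsKer_le_ker_characterIdempotent _ (commutatorWithAut_le_ker fun x => ?_)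
    have hzχ : z • χ = χ := hz _ hχ
    calc χ (act z x)
      _ = (z • χ) (act z x) := by rw [hzχ]
      _ = χ x := congrArg χ (MulAut.inv_apply_self M (act z) x)

end SemidirectProduct

section BaseChange

variable {F K V G : Type*} [CommRing F] [CommRing K] [Algebra F K] [AddCommGroup V] [Module F V]

variable (K) in
/-- The representation obtained from `ρ` by extending scalars from `F` to `K`. -/
noncomputable def baseChangeRepresentation [Monoid G] (ρ : Representation F G V) :
    Representation K G (K ⊗[F] V) :=
  (End.baseChangeHom F K V : End F V →* End K (K ⊗[F] V)).comp ρ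

lemma norm_baseChangeRepresentation [Group G] [Fintype G] (ρ : Representation F G V) :
    (baseChangeRepresentation K ρ).norm = ρ.norm.baseChange K :=
  (map_sum (End.baseChangeHom F K V) _ _).symm

lemma coinvariantsKer_baseChange_le [Monoid G] (ρ : Representation F G V) :
    (Coinvariants.ker ρ).baseChange K ≤ Coinvariants.ker (baseChangeRepresentation K ρ) := by
  rw [Coinvariants.ker, Submodule.baseChange_span, Submodule.span_le]
  rintro _ ⟨_, ⟨⟨g, v⟩, rfl⟩, rfl⟩
  rw [map_sub]
  exact Representation.Coinvariants.sub_mem_ker (ρ := baseChangeRepresentation K ρ) g (1 ⊗ₜ v)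

end BaseChange

theorem finrank_coinvariantsKer_commutatorWithAut_le {F M G V : Type*} [Field F] [AddCommGroup V]
    [Module F V] [FiniteDimensional F V] [CommGroup M] [Finite M] [Group G] [Fintype G]
    (hM : (Nat.card M : F) ≠ 0) {act : G →* MulAut M} (ρ : Representation F (M ⋊[act] G) V) {z : G}
    (hz : ∀ H : Subgroup G, H ≠ ⊥ → z ∈ H) :
    finrank F (Coinvariants.ker
        ((ρ.comp SemidirectProduct.inl).comp (commutatorWithAut (act z)).subtype)) ≤
      Fintype.card G * finrank F (Representation.norm (ρ.comp SemidirectProduct.inr)).range := by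
  let K := AlgebraicClosure F
  have : NeZero (Monoid.exponent M : F) := ⟨fun h => hM <| by
    obtain ⟨k, hk⟩ := Group.exponent_dvd_nat_card (G := M)
    rw [hk, Nat.cast_mul, h, zero_mul]⟩
  rw [← finrank_submodule_baseChange (K := K) (Coinvariants.ker _),
    ← finrank_submodule_baseChange (K := K) (LinearMap.range _), ← range_baseChange,
    ← norm_baseChangeRepresentation]
  exact (Submodule.finrank_mono (coinvariantsKer_baseChange_le _)).trans
    (finrank_coinvariantsKer_commutatorWithAut_le_of_hasEnoughRootsOfUnity
      (baseChangeRepresentation K ρ) hz)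

section RegularVector

variable {k A V : Type*} [CommRing k] [AddCommGroup V] [Module k V]

lemma commute_averageMap [Group A] [Fintype A] [Invertible (Fintype.card A : k)]
    (ρ : Representation k A V) {f : End k V} (hf : ∀ a, Commute f (ρ a)) :
    Commute f ρ.averageMap := by
  simp only [Representation.averageMap, GroupAlgebra.average, map_smul, map_sum,
    Representation.asAlgebraHom_of]
  exact (Commute.sum_right _ _ _ fun a _ => hf a).smul_right _

variable [CommGroup A] [Finite A] (ρ : Representation k A V)

theorem exists_forall_apply_eq_one_of_apply_eq_self (hA : IsUnit (Nat.card A : k)) :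
    ∃ w, ∀ a, ρ a w = w → ρ a = 1 := by
  let _ : MulAction A V := MulAction.compHom V ρ
  -- Take `w` with minimal stabilizer `S`. Adding to `w` a vector of zero `S`-average does not
  -- enlarge the stabilizer, so by minimality `S` also fixes all such vectors, and hence all of `V`.
  obtain ⟨w, -, hmin⟩ := exists_minimalFor_of_wellFoundedLT (fun _ : V => True) (stabilizer A)
    ⟨0, trivial⟩
  let S := stabilizer A w
  have := Fintype.ofFinite S
  have hS : IsUnit (Fintype.card S : k) := by
    rw [← Nat.card_eq_fintype_card]
    exact isUnit_of_dvd_unit (Nat.cast_dvd_cast S.card_subgroup_dvd_card) hA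
  have := hS.invertible
  let σ : Representation k S V := ρ.comp S.subtype
  have havg_fix (s : S) (v : V) : ρ s (σ.averageMap v) = σ.averageMap v :=
    σ.averageMap_invariant v s
  have havg_comm (a : A) (v : V) : ρ a (σ.averageMap v) = σ.averageMap (ρ a v) :=
    LinearMap.congr_fun (commute_averageMap σ fun s => (Commute.all a (s : A)).map ρ) v
  refine ⟨w, fun a ha => LinearMap.ext fun u => ?_⟩
  have havg : σ.averageMap (w + (u - σ.averageMap u)) = w := by
    rw [map_add, map_sub, σ.averageMap_id w fun s => s.2,
      σ.averageMap_id _ (σ.averageMap_invariant u), sub_self, add_zero]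
  have hle : stabilizer A (w + (u - σ.averageMap u)) ≤ S := fun b hb => by
    have hb : ρ b (w + (u - σ.averageMap u)) = w + (u - σ.averageMap u) := hb
    change ρ b w = w
    rw [← havg, havg_comm, hb]
  have ha' : ρ a (w + (u - σ.averageMap u)) = w + (u - σ.averageMap u) := hmin trivial hle ha
  rwa [map_add, map_sub, ha, havg_fix ⟨a, ha⟩, add_right_inj, sub_left_inj] at ha'

theorem natCard_le_natCard_coinvariantsKer [Finite V] (hA : IsUnit (Nat.card A : k))
    (hρ : Function.Injective ρ) : Nat.card A ≤ Nat.card (Coinvariants.ker ρ) := by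
  obtain ⟨w, hw⟩ := exists_forall_apply_eq_one_of_apply_eq_self ρ hA
  refine Nat.card_le_card_of_injective (fun a => (⟨ρ a w - w,
    Representation.Coinvariants.sub_mem_ker a w⟩ : Coinvariants.ker ρ)) fun a b hab => ?_
  have hab : ρ a w = ρ b w := sub_left_injective (congrArg Subtype.val hab)
  have hfix : ρ (b⁻¹ * a) w = w := by
    rw [map_mul, End.mul_apply, hab, ρ.inv_self_apply]
  exact (inv_mul_eq_one.mp (hρ ((hw _ hfix).trans (map_one ρ).symm))).symm

end RegularVector

lemma pow_mem_of_card_eq_prime_pow {G : Type*} [Group G] {p n : ℕ} (hp : p.Prime)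
    (hG : Nat.card G = p ^ n) {H : Subgroup G} [H.Normal] (hH : H ≠ ⊥) (x : G) :
    x ^ p ^ (n - 1) ∈ H := by
  have : Finite G := Nat.finite_of_card_ne_zero (hG ▸ pow_ne_zero n hp.ne_zero)
  obtain ⟨i, hin, hi⟩ := (Nat.dvd_prime_pow hp).mp (hG ▸ H.index_dvd_card)
  have hi_ne : i ≠ n := by
    rintro rfl
    have := H.card_mul_index
    rw [hi, hG] at this
    exact hH (Subgroup.card_eq_one.mp (Nat.eq_of_mul_eq_mul_right (pow_pos hp.pos i) (by simpa)))
  obtain ⟨c, hc⟩ : H.index ∣ p ^ (n - 1) := hi ▸ pow_dvd_pow p (by omega)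
  rw [hc, pow_mul]
  exact H.pow_mem (H.pow_index_mem x) c

lemma natCast_card_ne_zero_of_isPGroup {p q : ℕ} (hp : p.Prime) (hq : q.Prime) (hqp : q ≠ p)
    {M : Type*} [Group M] [Finite M] (hM : IsPGroup p M) : (Nat.card M : ZMod q) ≠ 0 := by
  have := Fact.mk hp
  obtain ⟨k, hk⟩ := hM.exists_card_eq
  rw [hk, Ne, ZMod.natCast_eq_zero_iff]
  exact fun h => hqp ((Nat.prime_dvd_prime_iff_eq hq hp).mp (hq.dvd_of_dvd_pow h))

theorem card_commutator_with_aut_le_card_fixed_points_pow_general {F M G V : Type*} [Field F]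
    [Finite F] [CommGroup M] [Finite M] [Group G] [Finite G] {act : G →* MulAut M}
    [AddCommGroup V] [Module F V] [FiniteDimensional F V] (ρ : Representation F (M ⋊[act] G) V)
    (hM : (Nat.card M : F) ≠ 0) (hρ : Function.Injective fun x => ρ (SemidirectProduct.inl x))
    {z : G} (hz : ∀ H : Subgroup G, H ≠ ⊥ → z ∈ H) :
    Nat.card (commutatorWithAut (act z)) ≤
      Nat.card (Representation.invariants (ρ.comp SemidirectProduct.inr)) ^ Nat.card G := by
  have := Fintype.ofFinite G
  have := Module.finite_of_finite F (M := V)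
  set A := commutatorWithAut (act z)
  have hA : IsUnit (Nat.card A : F) :=
    isUnit_of_dvd_unit (Nat.cast_dvd_cast A.card_subgroup_dvd_card) (IsUnit.mk0 _ hM)
  have hnorm : (Representation.norm (ρ.comp SemidirectProduct.inr)).range ≤
      Representation.invariants (ρ.comp SemidirectProduct.inr) := by
    rintro _ ⟨v, rfl⟩ g
    exact Representation.self_norm_apply _ g v
  calc Nat.card A
    _ ≤ Nat.card (Coinvariants.ker ((ρ.comp SemidirectProduct.inl).comp A.subtype)) :=
      natCard_le_natCard_coinvariantsKer _ hA (hρ.comp Subtype.val_injective)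
    _ = Nat.card F ^ finrank F (Coinvariants.ker ((ρ.comp SemidirectProduct.inl).comp A.subtype)) :=
      Module.natCard_eq_pow_finrank
    _ ≤ Nat.card F ^ (finrank F (Representation.invariants (ρ.comp SemidirectProduct.inr)) *
          Nat.card G) := by
      refine Nat.pow_le_pow_right Nat.card_pos ?_
      rw [mul_comm, Nat.card_eq_fintype_card]
      exact (finrank_coinvariantsKer_commutatorWithAut_le hM ρ hz).trans
        (Nat.mul_le_mul_left _ (Submodule.finrank_mono hnorm))
    _ = Nat.card (Representation.invariants (ρ.comp SemidirectProduct.inr)) ^ Nat.card G := by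
      rw [pow_mul, ← Module.natCard_eq_pow_finrank]

theorem natCard_commutatorWithAut_le_of_orderOf_eq_prime_pow {F M V : Type*} [Field F] [Finite F]
    [CommGroup M] [Finite M] {p n : ℕ} (hp : p.Prime) {φ : MulAut M} (hφ : orderOf φ = p ^ n)
    [AddCommGroup V] [Module F V] [FiniteDimensional F V]
    (ρ : Representation F (M ⋊[(Subgroup.zpowers φ).subtype] Subgroup.zpowers φ) V)
    (hM : (Nat.card M : F) ≠ 0) (hρ : Function.Injective fun x => ρ (SemidirectProduct.inl x)) :
    Nat.card (commutatorWithAut (φ ^ p ^ (n - 1))) ≤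
      Nat.card {v : V //
        ρ (SemidirectProduct.inr ⟨φ, Subgroup.mem_zpowers φ⟩) v = v} ^ (p ^ n) := by
  let g : Subgroup.zpowers φ := ⟨φ, Subgroup.mem_zpowers φ⟩
  have hcard : Nat.card (Subgroup.zpowers φ) = p ^ n := (Nat.card_zpowers φ).trans hφ
  have : Finite (Subgroup.zpowers φ) :=
    Nat.finite_of_card_ne_zero (hcard ▸ pow_ne_zero n hp.ne_zero)
  have := Module.finite_of_finite F (M := V)
  calc Nat.card (commutatorWithAut (φ ^ p ^ (n - 1)))
    _ ≤ Nat.card (Representation.invariants (ρ.comp SemidirectProduct.inr)) ^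
          Nat.card (Subgroup.zpowers φ) :=
      card_commutator_with_aut_le_card_fixed_points_pow_general (z := g ^ p ^ (n - 1)) ρ hM hρ
        fun H hH => pow_mem_of_card_eq_prime_pow hp hcard hH g
    _ = Nat.card (Representation.invariants (ρ.comp SemidirectProduct.inr)) ^ p ^ n := by
      rw [hcard]
    _ ≤ Nat.card {v : V // ρ (SemidirectProduct.inr g) v = v} ^ p ^ n :=
      Nat.pow_le_pow_left (Nat.card_le_card_of_injective (Subtype.map id fun v hv => hv g)
        (Subtype.map_injective _ Function.injective_id)) _

theorem card_commutator_with_aut_le_card_fixed_points_pow :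
    ∀ (p n q : ℕ), p.Prime → 1 ≤ n → q.Prime → q ≠ p →
      ∀ (M : Type) [CommGroup M] [Finite M], IsPGroup p M →
        ∀ φ : MulAut M, orderOf φ = p ^ n →
          ∀ (V : Type) [AddCommGroup V] [Module (ZMod q) V] [Finite V],
            ∀ ρ : Representation (ZMod q)
                (M ⋊[(Subgroup.zpowers φ).subtype] ↥(Subgroup.zpowers φ)) V,
              -- `M` acts faithfully on `V`
              Function.Injective (fun x : M => ρ (SemidirectProduct.inl x)) →
              Nat.card ↥(commutatorWithAut (φ ^ p ^ (n - 1))) ≤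
                Nat.card {v : V //
                  ρ (SemidirectProduct.inr ⟨φ, Subgroup.mem_zpowers φ⟩) v = v} ^ (p ^ n) := by
  intro p n q hp _ hq hqp M _ _ hM φ hφ V _ _ _ ρ hρ
  have := Fact.mk hq
  exact natCard_commutatorWithAut_le_of_orderOf_eq_prime_pow hp hφ ρ
    (natCast_card_ne_zero_of_isPGroup hp hq hqp hM) hρ
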